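/- arXiv:1412.2193 — 5 statements merged into one kernel-verified Lean document; each statement's English description precedes it below -/
import Mathlib

section
/- Let m = n and let A be the unit sphere in ℝⁿ, and suppose X ⊇ A. If X contains the closed unit ball, then K*(X,A) = H̃^{n−1}(A) \ {0}. If X does not contain the closed unit ball, then K*(X,A) = ∅. -/
/-!
Formalization background.  Čech cohomology is not available in Mathlib, so we axiomatize it:
a `CechTheory n R G` provides reduced, unreduced and relative Čech cohomology `R`-modules with
coefficients in the `R`-module `G` for subsets of `ℝⁿ` (with the subspace topology), together
with contravariant functoriality, homotopy invariance, the comparison between reduced and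
unreduced cohomology in positive degrees, the natural projection onto reduced cohomology in
degree `0`, the convention `H̃⁰(∅) = 0`, the vanishing of the reduced cohomology of a point,
and the continuity property of Čech cohomology for directed intersections of compact sets.
-/

open Set CategoryTheory MeasureTheory Filter
open scoped ENNReal unitInterval

noncomputable section

/-- Euclidean `n`-space `ℝⁿ`. -/
abbrev Euc (n : ℕ) := EuclideanSpace ℝ (Fin n)

/-- An axiomatization of Čech cohomology with coefficients in an `R`-module `G` for subsets
of `ℝⁿ` (all subsets carry the subspace topology). -/
structure CechTheory (n : ℕ) (R : Type) [CommRing R] (G : Type) [AddCommGroup G]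
    [Module R G] : Type 1 where
  /-- reduced Čech cohomology `H̃ᵏ(A; G)` -/
  Hred : ℕ → Set (Euc n) → ModuleCat.{0} R
  /-- unreduced Čech cohomology `Hᵏ(A; G)` -/
  H : ℕ → Set (Euc n) → ModuleCat.{0} R
  /-- relative Čech cohomology `Hᵏ(X, A; G)` of a pair (used only to express orientability) -/
  Hpair : ℕ → Set (Euc n) → Set (Euc n) → ModuleCat.{0} R
  /-- the pullback on reduced cohomology induced by a continuous map -/
  mapRed : ∀ (k : ℕ) {A B : Set (Euc n)}, C(A, B) → (Hred k B ⟶ Hred k A)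
  /-- the pullback on unreduced cohomology induced by a continuous map -/
  map : ∀ (k : ℕ) {A B : Set (Euc n)}, C(A, B) → (H k B ⟶ H k A)
  mapRed_id : ∀ (k : ℕ) (A : Set (Euc n)), mapRed k (ContinuousMap.id A) = 𝟙 (Hred k A)
  mapRed_comp : ∀ (k : ℕ) {A B C' : Set (Euc n)} (f : C(A, B)) (g : C(B, C')),
    mapRed k (g.comp f) = mapRed k g ≫ mapRed k f
  map_id : ∀ (k : ℕ) (A : Set (Euc n)), map k (ContinuousMap.id A) = 𝟙 (H k A)
  map_comp : ∀ (k : ℕ) {A B C' : Set (Euc n)} (f : C(A, B)) (g : C(B, C')),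
    map k (g.comp f) = map k g ≫ map k f
  /-- homotopy invariance of reduced Čech cohomology -/
  mapRed_homotopic : ∀ (k : ℕ) {A B : Set (Euc n)} (f g : C(A, B)),
    Nonempty (f.Homotopy g) → mapRed k f = mapRed k g
  /-- homotopy invariance of unreduced Čech cohomology -/
  map_homotopic : ∀ (k : ℕ) {A B : Set (Euc n)} (f g : C(A, B)),
    Nonempty (f.Homotopy g) → map k f = map k g
  /-- in positive degrees, reduced and unreduced Čech cohomology agree -/
  redIso : ∀ (k : ℕ), 0 < k → ∀ A : Set (Euc n), Hred k A ≅ H k A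
  redIso_natural : ∀ (k : ℕ) (hk : 0 < k) {A B : Set (Euc n)} (f : C(A, B)),
    mapRed k f ≫ (redIso k hk A).hom = (redIso k hk B).hom ≫ map k f
  /-- in degree `0`, the natural projection of unreduced onto reduced cohomology -/
  projRed : ∀ A : Set (Euc n), H 0 A ⟶ Hred 0 A
  projRed_natural : ∀ {A B : Set (Euc n)} (f : C(A, B)),
    map 0 f ≫ projRed A = projRed B ≫ mapRed 0 f
  projRed_surjective : ∀ A : Set (Euc n), Function.Surjective (projRed A)
  /-- convention: `H̃⁰(∅) = 0` (hence every map into it, e.g. the one induced by the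
  inclusion of `∅` into any set, is zero) -/
  hred_empty_eq_zero : ∀ x : Hred 0 (∅ : Set (Euc n)), x = 0
  /-- the reduced cohomology of a point vanishes in all degrees -/
  hred_point : ∀ (k : ℕ) (p : Euc n) (x : Hred k ({p} : Set (Euc n))), x = 0
  /-- continuity of Čech cohomology: for a (downward) directed family of compact sets, every
  class on the intersection is the restriction of a class on some member of the family -/
  continuity : ∀ (k : ℕ) (ι : Type) [Nonempty ι] (X : ι → Set (Euc n)),
    (∀ i, IsCompact (X i)) → (∀ i j, ∃ l, X l ⊆ X i ∧ X l ⊆ X j) →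
    ∀ x : Hred k (⋂ i, X i), ∃ (i : ι) (y : Hred k (X i)),
      mapRed k ⟨Set.inclusion (Set.iInter_subset X i),
        continuous_inclusion (Set.iInter_subset X i)⟩ y = x

namespace CechTheory

variable {n : ℕ} {R : Type} [CommRing R] {G : Type} [AddCommGroup G] [Module R G]

/-- The pullback `ι(X,A)* : H̃ᵏ(X) → H̃ᵏ(A)` induced by an inclusion `A ⊆ X`
(reduced Čech cohomology). -/
def res (T : CechTheory n R G) (k : ℕ) {A X : Set (Euc n)} (h : A ⊆ X) :
    T.Hred k X ⟶ T.Hred k A :=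
  T.mapRed k ⟨Set.inclusion h, continuous_inclusion h⟩

/-- The pullback `ι(X,A)* : Hᵏ(X) → Hᵏ(A)` induced by an inclusion `A ⊆ X`
(unreduced Čech cohomology). -/
def resH (T : CechTheory n R G) (k : ℕ) {A X : Set (Euc n)} (h : A ⊆ X) :
    T.H k X ⟶ T.H k A :=
  T.map k ⟨Set.inclusion h, continuous_inclusion h⟩

/-- The algebraic coboundary `K*(X,A)` of `X` with respect to `A` (in degree `m-1`):
the complement in `H̃^{m-1}(A)` of the image of `ι(X,A)*`. -/
def K (T : CechTheory n R G) (m : ℕ) (X A : Set (Euc n)) (h : A ⊆ X) :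
    Set (T.Hred (m - 1) A) :=
  {x | x ∉ Set.range (T.res (m - 1) h)}

/-- `X` is a surface with coboundary `⊇ L` with respect to `A`:  `A ⊆ X` and `L` is disjoint
from the image of `ι(X,A)* : H̃^{m-1}(X) → H̃^{m-1}(A)`, i.e. `K*(X,A) ⊇ L`. -/
def IsSurface (T : CechTheory n R G) (m : ℕ) (A X : Set (Euc n))
    (L : Set (T.Hred (m - 1) A)) : Prop :=
  ∃ h : A ⊆ X, ∀ x ∈ L, x ∉ Set.range (T.res (m - 1) h)

/-- The collection `𝔖(A, U, G, L, m)` of compact sets `X ⊆ U` such that `X ∪ A` is a surface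
with coboundary `⊇ L` with respect to `A` and `𝓗^m(X) < ∞`. -/
def Spanning (T : CechTheory n R G) (m : ℕ) (A U : Set (Euc n))
    (L : Set (T.Hred (m - 1) A)) : Set (Set (Euc n)) :=
  {X | X ⊆ U ∧ IsCompact X ∧ T.IsSurface m A (X ∪ A) L ∧ μH[(m : ℝ)] X < ⊤}

end CechTheory

/-- The core `X*` of a set `X` (of Hausdorff dimension `m`): the points `p ∈ X` all of whose
neighborhoods meet `X` in a set of positive `m`-dimensional Hausdorff measure. -/
def core {n : ℕ} (m : ℕ) (X : Set (Euc n)) : Set (Euc n) :=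
  {p | p ∈ X ∧ ∀ r : ℝ, 0 < r → 0 < μH[(m : ℝ)] (X ∩ Metric.ball p r)}

/-- Retraction of a set missing an interior point of the ball onto the sphere. -/
theorem exists_retraction {n : ℕ} (X : Set (Euc n)) (p : Euc n) (hp : ‖p‖ < 1) (hpX : p ∉ X) :
    ∃ r : C(X, Metric.sphere (0 : Euc n) 1), ∀ x : X, ‖(x : Euc n)‖ = 1 → (r x : Euc n) = x := by
  let b : Euc n → ℝ := fun x => inner ℝ p (x - p)
  let c : Euc n → ℝ := fun x => ‖x - p‖ ^ 2
  let s : Euc n → ℝ := fun x => (-b x + Real.sqrt (b x ^ 2 + (1 - ‖p‖ ^ 2) * c x)) / c x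
  have hp2 : 0 < 1 - ‖p‖ ^ 2 := by nlinarith [norm_nonneg p]
  have hc : ∀ x : X, 0 < c x := by
    intro x
    have h : (x : Euc n) - p ≠ 0 := by
      intro h
      exact hpX (sub_eq_zero.mp h ▸ x.2)
    have := norm_pos_iff.mpr h
    positivity
  have hnorm : ∀ (x : Euc n) (t : ℝ),
      ‖p + t • (x - p)‖ ^ 2 = ‖p‖ ^ 2 + 2 * t * b x + t ^ 2 * c x := by
    intro x t
    rw [norm_add_sq_real, inner_smul_right, norm_smul, mul_pow, Real.norm_eq_abs, sq_abs]
    simp only [b, c]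
    ring
  have hsph : ∀ x : X, p + s x • ((x : Euc n) - p) ∈ Metric.sphere (0 : Euc n) 1 := by
    intro x
    have hcx := hc x
    have hq : Real.sqrt (b x ^ 2 + (1 - ‖p‖ ^ 2) * c x) ^ 2 = b x ^ 2 + (1 - ‖p‖ ^ 2) * c x :=
      Real.sq_sqrt (by positivity)
    have hs : s x * c x + b x = Real.sqrt (b x ^ 2 + (1 - ‖p‖ ^ 2) * c x) := by
      simp only [s]
      rw [div_mul_cancel₀ _ hcx.ne']
      ring
    rw [← hs] at hq
    have h1 : ‖p + s x • ((x : Euc n) - p)‖ ^ 2 = 1 := by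
      rw [hnorm]
      apply mul_left_cancel₀ hcx.ne'
      linarith
    rw [mem_sphere_zero_iff_norm]
    exact (sq_eq_sq₀ (norm_nonneg _) zero_le_one).mp (by rw [h1]; norm_num)
  have hcont : Continuous (fun x : X => p + s x • ((x : Euc n) - p)) := by
    have hb : Continuous (fun x : X => b x) := by
      simp only [b]; fun_prop
    have hcc : Continuous (fun x : X => c x) := by
      simp only [c]; fun_prop
    have hss : Continuous (fun x : X => s x) := by
      simp only [s]
      refine Continuous.div ?_ hcc (fun x => (hc x).ne')
      exact hb.neg.add (Real.continuous_sqrt.comp ((hb.pow 2).add (continuous_const.mul hcc)))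
    exact continuous_const.add (hss.smul (by fun_prop))
  refine ⟨⟨fun x => ⟨p + s x • ((x : Euc n) - p), hsph x⟩, hcont.subtype_mk _⟩, ?_⟩
  intro x hx
  have hcx := hc x
  have h1 := hnorm x 1
  have e1 : p + (1 : ℝ) • ((x : Euc n) - p) = x := by simp
  rw [e1, hx] at h1
  have hbc : 0 < b x + c x := by nlinarith
  have hs1 : s x = 1 := by
    have : b x ^ 2 + (1 - ‖p‖ ^ 2) * c x = (b x + c x) ^ 2 := by
      have : 1 - ‖p‖ ^ 2 = 2 * b x + c x := by linarith
      rw [this]; ring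
    simp only [s]
    rw [this, Real.sqrt_sq hbc.le]
    field_simp
    ring
  change p + s x • ((x : Euc n) - p) = x
  rw [hs1, e1]

/-- The inclusion of the sphere in the ball is homotopic to the constant map. -/
theorem res_ball_zero {n : ℕ} {R : Type} [CommRing R] {G : Type} [AddCommGroup G] [Module R G]
    (T : CechTheory n R G) (k : ℕ)
    (h : Metric.sphere (0 : Euc n) 1 ⊆ Metric.closedBall (0 : Euc n) 1)
    (y : T.Hred k (Metric.closedBall (0 : Euc n) 1)) : T.res k h y = 0 := by
  let f : C(Metric.sphere (0 : Euc n) 1, Metric.closedBall (0 : Euc n) 1) :=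
    ⟨Set.inclusion h, continuous_inclusion h⟩
  let g : C(Metric.sphere (0 : Euc n) 1, ({0} : Set (Euc n))) := ⟨fun _ => ⟨0, rfl⟩, continuous_const⟩
  let j : C(({0} : Set (Euc n)), Metric.closedBall (0 : Euc n) 1) :=
    ⟨fun _ => ⟨0, by simp⟩, continuous_const⟩
  have H : Nonempty (f.Homotopy (j.comp g)) := by
    refine ⟨⟨⟨fun q => ⟨(1 - (q.1 : ℝ)) • (q.2 : Euc n), ?_⟩, ?_⟩, ?_, ?_⟩⟩
    · have h2 : ‖(q.2 : Euc n)‖ = 1 := mem_sphere_zero_iff_norm.mp q.2.2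
      rw [mem_closedBall_zero_iff, norm_smul, h2, mul_one, Real.norm_eq_abs, abs_le]
      have := q.1.2.1
      have := q.1.2.2
      constructor <;> linarith
    · exact Continuous.subtype_mk (by fun_prop) _
    · intro x
      apply Subtype.ext
      simp [f]
    · intro x
      apply Subtype.ext
      simp [j]
  have e : T.res k h = T.mapRed k j ≫ T.mapRed k g := by
    rw [← T.mapRed_comp]
    exact T.mapRed_homotopic k _ _ H
  rw [e, ModuleCat.comp_apply, T.hred_point k 0 (T.mapRed k j y), map_zero]

/-- Let `m = n` and let `A` be the unit sphere in `ℝⁿ`, and suppose `X ⊇ A`.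
If `X` contains the closed unit ball then `K*(X,A) = H̃^{n-1}(A) \ {0}`; if `X` does not contain
the closed unit ball then `K*(X,A) = ∅`. -/
theorem stmt3 {n : ℕ} {R : Type} [CommRing R] {G : Type} [AddCommGroup G] [Module R G]
    (T : CechTheory n R G) (hn : 1 ≤ n)
    (X : Set (Euc n)) (hAX : Metric.sphere (0 : Euc n) 1 ⊆ X) :
    (Metric.closedBall (0 : Euc n) 1 ⊆ X →
      T.K n X (Metric.sphere (0 : Euc n) 1) hAX
        = {x : T.Hred (n - 1) (Metric.sphere (0 : Euc n) 1) | x ≠ 0}) ∧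
    (¬ Metric.closedBall (0 : Euc n) 1 ⊆ X →
      T.K n X (Metric.sphere (0 : Euc n) 1) hAX = ∅) := by
  constructor
  · intro hB
    have hAB : Metric.sphere (0 : Euc n) 1 ⊆ Metric.closedBall (0 : Euc n) 1 :=
      Metric.sphere_subset_closedBall
    have e : T.res (n - 1) hAX = T.res (n - 1) hB ≫ T.res (n - 1) hAB :=
      T.mapRed_comp (n - 1) ⟨Set.inclusion hAB, continuous_inclusion hAB⟩
        ⟨Set.inclusion hB, continuous_inclusion hB⟩
    ext x
    simp only [CechTheory.K, Set.mem_setOf_eq, ne_eq, not_iff_not]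
    constructor
    · rintro ⟨y, rfl⟩
      rw [e, ModuleCat.comp_apply, res_ball_zero]
    · rintro rfl
      exact ⟨0, map_zero _⟩
  · intro hB
    obtain ⟨p, hpB, hpX⟩ := Set.not_subset.mp hB
    have hp : ‖p‖ < 1 := by
      refine lt_of_le_of_ne (mem_closedBall_zero_iff.mp hpB) ?_
      intro h
      exact hpX (hAX (mem_sphere_zero_iff_norm.mpr h))
    obtain ⟨r, hr⟩ := exists_retraction X p hp hpX
    have e : T.mapRed (n - 1) r ≫ T.res (n - 1) hAX = 𝟙 _ := by
      rw [← T.mapRed_id, CechTheory.res, ← T.mapRed_comp]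
      congr 1
      ext1 x
      apply Subtype.ext
      exact hr _ (mem_sphere_zero_iff_norm.mp x.2)
    rw [Set.eq_empty_iff_forall_notMem]
    intro x hx
    apply hx
    refine ⟨T.mapRed (n - 1) r x, ?_⟩
    rw [← ModuleCat.comp_apply, e, ModuleCat.id_apply]
end
end

section
/- Let f : I × Y → X be a continuous map into X ⊆ ℝⁿ, where I = [0,1]. Set A₀ = f({0} × Y), A₁ = f({1} × Y), A = A₀ ∪ A₁, f₀ = f restricted to {0} × Y and f₁ = f restricted to {1} × Y. Suppose f₀ is a homeomorphism from {0} × Y onto A₀, and let L₀ ⊆ H̃^{m−1}(A₀) \ {0}. Then there exists L₁ ⊆ H̃^{m−1}(A₁) \ {0} such that (i) K*(X,A) ∪ (ι(A,A₀)*)^{−1}(L₀) = K*(X,A) ∪ (ι(A,A₁)*)^{−1}(L₁), and (ii) if X is a surface with coboundary ⊇ L₀ (with respect to A₀), then X is a surface with coboundary ⊇ L₁ (with respect to A₁). -/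
/-!
Formalization background.  Čech cohomology is not available in Mathlib, so we axiomatize it:
a `CechTheory n R G` provides reduced, unreduced and relative Čech cohomology `R`-modules with
coefficients in the `R`-module `G` for subsets of `ℝⁿ` (with the subspace topology), together
with contravariant functoriality, homotopy invariance, the comparison between reduced and
unreduced cohomology in positive degrees, the natural projection onto reduced cohomology in
degree `0`, the convention `H̃⁰(∅) = 0`, the vanishing of the reduced cohomology of a point,
and the continuity property of Čech cohomology for directed intersections of compact sets.
-/

open Set CategoryTheory MeasureTheory Filter
open scoped ENNReal unitInterval

noncomputable section

/-- Let `f : I × Y → X` be continuous, `A₀ = f({0} × Y)`, `A₁ = f({1} × Y)`,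
`A = A₀ ∪ A₁`, and suppose `f₀ = f|_{{0} × Y}` is a homeomorphism onto `A₀` (equivalently,
`y ↦ f(0,y)` is a homeomorphism of `Y` onto `A₀`).  Given `L₀ ⊆ H̃^{m-1}(A₀) \ {0}`, there is
`L₁ ⊆ H̃^{m-1}(A₁) \ {0}` with
`K*(X,A) ∪ (ι(A,A₀)*)⁻¹(L₀) = K*(X,A) ∪ (ι(A,A₁)*)⁻¹(L₁)`, and such that if `X` is a surface
with coboundary `⊇ L₀` then `X` is a surface with coboundary `⊇ L₁`. -/
theorem stmt4 {n : ℕ} {R : Type} [CommRing R] {G : Type} [AddCommGroup G] [Module R G]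
    (T : CechTheory n R G) (m : ℕ) (hm : 1 ≤ m) (hmn : m ≤ n)
    (X : Set (Euc n)) (Y : Type) [TopologicalSpace Y]
    (f : C(unitInterval × Y, X))
    (A₀ A₁ A : Set (Euc n))
    (hA₀ : A₀ = Set.range fun y : Y => ((f (0, y) : X) : Euc n))
    (hA₁ : A₁ = Set.range fun y : Y => ((f (1, y) : X) : Euc n))
    (hA : A = A₀ ∪ A₁)
    (hAX : A ⊆ X)
    (hf₀ : IsHomeomorph fun y : Y =>
      (⟨((f (0, y) : X) : Euc n), by rw [hA₀]; exact Set.mem_range_self y⟩ : A₀))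
    (L₀ : Set (T.Hred (m - 1) A₀)) (hL₀ : (0 : T.Hred (m - 1) A₀) ∉ L₀) :
    ∃ L₁ : Set (T.Hred (m - 1) A₁), (0 : T.Hred (m - 1) A₁) ∉ L₁ ∧
      T.K m X A hAX ∪
          T.res (m - 1) (show A₀ ⊆ A by rw [hA]; exact Set.subset_union_left) ⁻¹' L₀
        = T.K m X A hAX ∪
          T.res (m - 1) (show A₁ ⊆ A by rw [hA]; exact Set.subset_union_right) ⁻¹' L₁ ∧
      (T.IsSurface m A₀ X L₀ → T.IsSurface m A₁ X L₁) := by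
  have hA₀X : A₀ ⊆ X := fun x hx => hAX (by rw [hA]; exact Or.inl hx)
  have hA₁X : A₁ ⊆ X := fun x hx => hAX (by rw [hA]; exact Or.inr hx)
  have h0A : A₀ ⊆ A := by rw [hA]; exact Set.subset_union_left
  have h1A : A₁ ⊆ A := by rw [hA]; exact Set.subset_union_right
  let e := hf₀.homeomorph
  let g : C(A₀, A₁) :=
    ⟨fun a => ⟨((f (1, e.symm a) : X) : Euc n), by rw [hA₁]; exact Set.mem_range_self _⟩, by
      fun_prop⟩
  let i₀ : C(A₀, X) := ⟨Set.inclusion hA₀X, continuous_inclusion hA₀X⟩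
  let i₁ : C(A₁, X) := ⟨Set.inclusion hA₁X, continuous_inclusion hA₁X⟩
  have hom : i₀.Homotopy (i₁.comp g) :=
    { toFun := fun p => f (p.1, e.symm p.2)
      continuous_toFun := by fun_prop
      map_zero_left := fun a => by
        have h := congrArg (fun z : A₀ => (z : Euc n)) (e.apply_symm_apply a)
        exact Subtype.ext h
      map_one_left := fun a => Subtype.ext rfl }
  have key : T.res (m - 1) hA₀X = T.res (m - 1) hA₁X ≫ T.mapRed (m - 1) g := by
    have h := T.mapRed_homotopic (m - 1) _ _ ⟨hom⟩
    rw [T.mapRed_comp] at h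
    exact h
  have key' : ∀ y, T.res (m - 1) hA₀X y = T.mapRed (m - 1) g (T.res (m - 1) hA₁X y) := by
    intro y
    rw [key]
    rfl
  have c0 : ∀ y, T.res (m - 1) h0A (T.res (m - 1) hAX y) = T.res (m - 1) hA₀X y := by
    intro y
    have h : T.res (m - 1) hA₀X = T.res (m - 1) hAX ≫ T.res (m - 1) h0A :=
      T.mapRed_comp (m - 1) ⟨Set.inclusion h0A, continuous_inclusion h0A⟩
        ⟨Set.inclusion hAX, continuous_inclusion hAX⟩
    rw [h]
    rfl
  have c1 : ∀ y, T.res (m - 1) h1A (T.res (m - 1) hAX y) = T.res (m - 1) hA₁X y := by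
    intro y
    have h : T.res (m - 1) hA₁X = T.res (m - 1) hAX ≫ T.res (m - 1) h1A :=
      T.mapRed_comp (m - 1) ⟨Set.inclusion h1A, continuous_inclusion h1A⟩
        ⟨Set.inclusion hAX, continuous_inclusion hAX⟩
    rw [h]
    rfl
  refine ⟨T.mapRed (m - 1) g ⁻¹' L₀, ?_, ?_, ?_⟩
  · intro h
    rw [Set.mem_preimage, map_zero] at h
    exact hL₀ h
  · ext x
    by_cases hx : x ∈ Set.range (T.res (m - 1) hAX)
    · have hK : x ∉ T.K m X A hAX := fun h => h hx
      obtain ⟨y, rfl⟩ := hx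
      simp only [Set.mem_union, hK, false_or, Set.mem_preimage]
      rw [c0, c1, key']
    · have hK : x ∈ T.K m X A hAX := hx
      simp only [Set.mem_union, hK, true_or]
  · rintro ⟨_, h⟩
    refine ⟨hA₁X, ?_⟩
    rintro _ hx ⟨y, rfl⟩
    exact h _ hx ⟨y, key' y⟩
end
end

section
/- Suppose X = X₁ ∪ ⋯ ∪ X_N ⊆ ℝⁿ, A ⊆ X, and A_r ⊆ X_r for each r. Let B = A ∪ A₁ ∪ ⋯ ∪ A_N. For each r, let L_r ⊆ H̃^{m−1}(A_r) \ {0} and suppose X_r is a surface with coboundary ⊇ L_r. Suppose L ⊆ H̃^{m−1}(A) \ {0} satisfies (ι(B,A)*)^{−1}(L) ⊆ ∪_r (ι(B,A_r)*)^{−1}(L_r). Then X is a surface with coboundary ⊇ L. -/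
/-!
Formalization background.  Čech cohomology is not available in Mathlib, so we axiomatize it:
a `CechTheory n R G` provides reduced, unreduced and relative Čech cohomology `R`-modules with
coefficients in the `R`-module `G` for subsets of `ℝⁿ` (with the subspace topology), together
with contravariant functoriality, homotopy invariance, the comparison between reduced and
unreduced cohomology in positive degrees, the natural projection onto reduced cohomology in
degree `0`, the convention `H̃⁰(∅) = 0`, the vanishing of the reduced cohomology of a point,
and the continuity property of Čech cohomology for directed intersections of compact sets.
-/

open Set CategoryTheory MeasureTheory Filter
open scoped ENNReal unitInterval

noncomputable section

/-- Lemma 11A.  Suppose `X = X₁ ∪ ⋯ ∪ X_N`, `A ⊆ X`, `A_r ⊆ X_r` for each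
`r`, and `B = A ∪ A₁ ∪ ⋯ ∪ A_N`.  For each `r` let `L_r ⊆ H̃^{m-1}(A_r) \ {0}` and suppose
`X_r` is a surface with coboundary `⊇ L_r`.  If `L ⊆ H̃^{m-1}(A) \ {0}` satisfies
`(ι(B,A)*)⁻¹(L) ⊆ ∪_r (ι(B,A_r)*)⁻¹(L_r)` then `X` is a surface with coboundary `⊇ L`. -/
theorem stmt5 {n : ℕ} {R : Type} [CommRing R] {G : Type} [AddCommGroup G] [Module R G]
    (T : CechTheory n R G) (m N : ℕ) (hm : 1 ≤ m) (hmn : m ≤ n)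
    (X A B : Set (Euc n)) (X' A' : Fin N → Set (Euc n))
    (hX : X = ⋃ r, X' r) (hAX : A ⊆ X) (hA' : ∀ r, A' r ⊆ X' r)
    (hB : B = A ∪ ⋃ r, A' r)
    (L' : ∀ r : Fin N, Set (T.Hred (m - 1) (A' r)))
    (hL' : ∀ r, (0 : T.Hred (m - 1) (A' r)) ∉ L' r)
    (hsurf : ∀ r, T.IsSurface m (A' r) (X' r) (L' r))
    (L : Set (T.Hred (m - 1) A)) (hL : (0 : T.Hred (m - 1) A) ∉ L)
    (hE : T.res (m - 1) (show A ⊆ B by rw [hB]; exact Set.subset_union_left) ⁻¹' L ⊆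
      ⋃ r : Fin N, T.res (m - 1)
        (show A' r ⊆ B by
          rw [hB]; exact (Set.subset_iUnion A' r).trans Set.subset_union_right) ⁻¹' L' r) :
    T.IsSurface m A X L := by
  have key : ∀ {P Q S : Set (Euc n)} (h₁ : P ⊆ Q) (h₂ : Q ⊆ S) (z : T.Hred (m - 1) S),
      T.res (m - 1) h₁ (T.res (m - 1) h₂ z) = T.res (m - 1) (h₁.trans h₂) z := by
    intro P Q S h₁ h₂ z
    have h := T.mapRed_comp (m - 1)
      (⟨Set.inclusion h₁, continuous_inclusion h₁⟩ : C(P, Q))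
      (⟨Set.inclusion h₂, continuous_inclusion h₂⟩ : C(Q, S))
    have h' := congrArg (fun f => f.hom z) h
    exact h'.symm
  have hAB : A ⊆ B := by rw [hB]; exact Set.subset_union_left
  have hX'X : ∀ r, X' r ⊆ X := fun r => by rw [hX]; exact Set.subset_iUnion X' r
  have hBX : B ⊆ X := by
    rw [hB]
    exact Set.union_subset hAX (Set.iUnion_subset fun r => (hA' r).trans (hX'X r))
  refine ⟨hAX, ?_⟩
  rintro x hx ⟨z, rfl⟩
  have hmem : T.res (m - 1) hBX z ∈ T.res (m - 1) hAB ⁻¹' L := by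
    rw [Set.mem_preimage, key]
    exact hx
  obtain ⟨r, hr⟩ := Set.mem_iUnion.1 (hE hmem)
  rw [Set.mem_preimage, key] at hr
  obtain ⟨h, hs⟩ := hsurf r
  refine hs _ hr ⟨T.res (m - 1) (hX'X r) z, ?_⟩
  rw [key]
end
end

section
/- Let A ⊆ ℝⁿ be compact and L ⊆ H̃^{m−1}(A) \ {0}. If {X_i} is a sequence of compact subsets of ℝⁿ, each containing A and each a surface with coboundary ⊇ L, and X_i → X in the Hausdorff metric, then X is a surface with coboundary ⊇ L. -/
/-!
Formalization background.  Čech cohomology is not available in Mathlib, so we axiomatize it: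
a `CechTheory n R G` provides reduced, unreduced and relative Čech cohomology `R`-modules with
coefficients in the `R`-module `G` for subsets of `ℝⁿ` (with the subspace topology), together
with contravariant functoriality, homotopy invariance, the comparison between reduced and
unreduced cohomology in positive degrees, the natural projection onto reduced cohomology in
degree `0`, the convention `H̃⁰(∅) = 0`, the vanishing of the reduced cohomology of a point,
and the continuity property of Čech cohomology for directed intersections of compact sets.
-/

open Set CategoryTheory MeasureTheory Filter
open scoped ENNReal unitInterval

noncomputable section

theorem CechTheory.continuity_eq {n : ℕ} {R : Type} [CommRing R] {G : Type} [AddCommGroup G]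
    [Module R G] (T : CechTheory n R G) (k : ℕ) (F : ℕ → Set (Euc n))
    (hF : ∀ i, IsCompact (F i)) (hdir : ∀ i j, ∃ l, F l ⊆ F i ∧ F l ⊆ F j)
    (X : Set (Euc n)) (hX : X = ⋂ i, F i) (x : T.Hred k X) :
    ∃ (i : ℕ) (h : X ⊆ F i) (y : T.Hred k (F i)), T.res k h y = x := by
  subst hX
  obtain ⟨i, y, h⟩ := T.continuity k ℕ F hF hdir x
  exact ⟨i, _, y, h⟩

theorem CechTheory.res_res {n : ℕ} {R : Type} [CommRing R] {G : Type} [AddCommGroup G]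
    [Module R G] (T : CechTheory n R G) (k : ℕ) {A B C : Set (Euc n)} (h : A ⊆ B) (h' : B ⊆ C)
    (y : T.Hred k C) : T.res k h (T.res k h' y) = T.res k (h.trans h') y := by
  have := T.mapRed_comp k ⟨Set.inclusion h, continuous_inclusion h⟩
    ⟨Set.inclusion h', continuous_inclusion h'⟩
  exact (congrArg (fun f => f y) this).symm

/-- Lemma 21C.  If `{X_i}` is a sequence of compact sets containing the
compact set `A`, each a surface with coboundary `⊇ L`, and `X_i → X` in the Hausdorff metric
(with `X` compact), then `X` is a surface with coboundary `⊇ L`. -/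
theorem stmt14 {n : ℕ} {R : Type} [CommRing R] {G : Type} [AddCommGroup G] [Module R G]
    (T : CechTheory n R G) (m : ℕ) (hm : 1 ≤ m) (hmn : m ≤ n)
    (A : Set (Euc n)) (hA : IsCompact A)
    (L : Set (T.Hred (m - 1) A)) (hL : (0 : T.Hred (m - 1) A) ∉ L)
    (Xf : ℕ → Set (Euc n))
    (hcomp : ∀ i, IsCompact (Xf i)) (hsub : ∀ i, A ⊆ Xf i)
    (hsurf : ∀ i, T.IsSurface m A (Xf i) L)
    (X : Set (Euc n)) (hX : IsCompact X)
    (hconv : Tendsto (fun i => EMetric.hausdorffEdist (Xf i) X) atTop (nhds 0)) :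
    T.IsSurface m A X L := by
  have hAX : A ⊆ X := by
    intro a ha
    rw [← hX.isClosed.closure_eq, Metric.mem_closure_iff_infEDist_zero]
    refine le_antisymm (ge_of_tendsto' hconv fun i => ?_) bot_le
    exact Metric.infEDist_le_hausdorffEDist_of_mem (hsub i ha)
  refine ⟨hAX, ?_⟩
  rintro x hx ⟨y, hy⟩
  obtain ⟨u, hu_anti, hu_pos, hu_lim⟩ := exists_seq_strictAnti_tendsto (0 : ℝ)
  have hI : X = ⋂ i, Metric.cthickening (u i) X := by
    refine Subset.antisymm (subset_iInter fun i => Metric.self_subset_cthickening X) ?_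
    intro a ha
    rw [mem_iInter] at ha
    rw [← hX.isClosed.closure_eq, Metric.mem_closure_iff_infEDist_zero]
    have h0 : Tendsto (fun i => ENNReal.ofReal (u i)) atTop (nhds 0) := by
      simpa using ENNReal.tendsto_ofReal hu_lim
    exact le_antisymm (ge_of_tendsto' h0 fun i => Metric.mem_cthickening_iff.1 (ha i)) bot_le
  obtain ⟨k, hk, z, hz⟩ := T.continuity_eq (m - 1) (fun i => Metric.cthickening (u i) X)
    (fun i => hX.cthickening)
    (fun i j => ⟨max i j, Metric.cthickening_mono (hu_anti.antitone (le_max_left i j)) X,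
      Metric.cthickening_mono (hu_anti.antitone (le_max_right i j)) X⟩) X hI y
  have hpos : (0 : ℝ≥0∞) < ENNReal.ofReal (u k) := ENNReal.ofReal_pos.2 (hu_pos k)
  obtain ⟨i, hi⟩ := (hconv.eventually (gt_mem_nhds hpos)).exists
  have hXi : Xf i ⊆ Metric.cthickening (u k) X := fun a ha =>
    Metric.mem_cthickening_iff.2 ((Metric.infEDist_le_hausdorffEDist_of_mem ha).trans hi.le)
  obtain ⟨h', hs⟩ := hsurf i
  refine hs x hx ⟨T.res (m - 1) hXi z, ?_⟩
  rw [T.res_res, ← hy, ← hz, T.res_res]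
end
end

section
/- Let G = R. Suppose A = A₁ ∪ ⋯ ∪ A_k ⊆ ℝⁿ, where A₁,…,A_k are (m−1)-dimensional closed R-orientable topological manifolds, and suppose every non-empty intersection of the A_i's is also an (m−1)-dimensional closed manifold (equivalently, every connected component of A is contained in some A_i). Then A is an (m−1)-dimensional closed R-orientable manifold, and if for each i = 1,…,k the set X_i is a surface with coboundary ⊇ L^R(A_i) (with respect to A_i), then X = X₁ ∪ ⋯ ∪ X_k is a surface with coboundary ⊇ L^R(A) (with respect to A). -/
/-!
Formalization background.  Čech cohomology is not available in Mathlib, so we axiomatize it: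
a `CechTheory n R G` provides reduced, unreduced and relative Čech cohomology `R`-modules with
coefficients in the `R`-module `G` for subsets of `ℝⁿ` (with the subspace topology), together
with contravariant functoriality, homotopy invariance, the comparison between reduced and
unreduced cohomology in positive degrees, the natural projection onto reduced cohomology in
degree `0`, the convention `H̃⁰(∅) = 0`, the vanishing of the reduced cohomology of a point,
and the continuity property of Čech cohomology for directed intersections of compact sets.
-/

open Set CategoryTheory MeasureTheory Filter
open scoped ENNReal unitInterval

noncomputable section

/-- `p` has an open neighborhood in `X` homeomorphic to `ℝ^d`. -/
def LocEuclAt {n : ℕ} (d : ℕ) (X : Set (Euc n)) (p : X) : Prop :=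
  ∃ U : Set X, IsOpen U ∧ p ∈ U ∧ Nonempty (U ≃ₜ EuclideanSpace ℝ (Fin d))

/-- `p` has an open neighborhood in `X` homeomorphic to the `d`-dimensional half-space
`[0,∞) × ℝ^{d-1}`. -/
def LocHalfAt {n : ℕ} (d : ℕ) (X : Set (Euc n)) (p : X) : Prop :=
  ∃ U : Set X, IsOpen U ∧ p ∈ U ∧
    Nonempty (U ≃ₜ ({t : ℝ // 0 ≤ t} × EuclideanSpace ℝ (Fin (d - 1))))

/-- `A` is a closed (i.e. compact and boundaryless) `d`-dimensional topological manifold. -/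
def IsClosedManifold {n : ℕ} (d : ℕ) (A : Set (Euc n)) : Prop :=
  IsCompact A ∧ ∀ p : A, LocEuclAt d A p

/-- `X` is a compact `d`-dimensional topological manifold with boundary. -/
def IsCompactMfdWithBoundary {n : ℕ} (d : ℕ) (X : Set (Euc n)) : Prop :=
  IsCompact X ∧ ∀ p : X, LocEuclAt d X p ∨ LocHalfAt d X p

/-- The boundary of a `d`-dimensional manifold with boundary `X`: the set of points having no
neighborhood homeomorphic to `ℝ^d`. -/
def mfdBoundary {n : ℕ} (d : ℕ) (X : Set (Euc n)) : Set (Euc n) :=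
  {q | ∃ h : q ∈ X, ¬ LocEuclAt d X ⟨q, h⟩}

namespace CechTheory

/-- The natural map from unreduced to reduced Čech cohomology: in positive degrees it is the
inverse of the comparison isomorphism, in degree `0` it is the natural projection. -/
def toRed {n : ℕ} {R : Type} [CommRing R] {G : Type} [AddCommGroup G] [Module R G]
    (T : CechTheory n R G) : ∀ (k : ℕ) (A : Set (Euc n)), T.H k A ⟶ T.Hred k A
  | 0, A => T.projRed A
  | (k + 1), A => (T.redIso (k + 1) (Nat.succ_pos k) A).inv

/-- The canonical subset `L^R(A) ⊆ H̃^{m-1}(A; R)` for `A` a closed `R`-orientable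
`(m-1)`-manifold with components `A₁, …, A_k`: the union over `i` of the images of the sets of
`R`-module generators of `H^{m-1}(Aᵢ) ≅ R` under the natural embeddings
`H^{m-1}(Aᵢ) ↪ H^{m-1}(A) ≅ ⊕ⱼ H^{m-1}(Aⱼ)` — equivalently (as formalized here), the classes
in `H^{m-1}(A)` restricting to a module generator on `Aᵢ` and to `0` on every other component —
transported to reduced cohomology: for `m > 1` via the comparison isomorphism, and for `m = 1`
by the projection onto `H̃⁰(A)`. -/
def LR {n : ℕ} {R : Type} [CommRing R] (T : CechTheory n R R) (m : ℕ) (A : Set (Euc n)) :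
    Set (T.Hred (m - 1) A) :=
  T.toRed (m - 1) A ''
    {x : T.H (m - 1) A | ∃ p, ∃ _ : p ∈ A,
      Submodule.span R {T.resH (m - 1) (connectedComponentIn_subset A p) x} = ⊤ ∧
      ∀ q (_ : q ∈ A), connectedComponentIn A q ≠ connectedComponentIn A p →
        T.resH (m - 1) (connectedComponentIn_subset A q) x = 0}

/-- A closed `d`-dimensional manifold `A` is `R`-orientable if and only if `H^d(C; R) ≅ R` for
every connected component `C` of `A`; this cohomological characterization of
`R`-orientability (which we take as the definition here) is valid for every commutative ring
`R`. -/
def ROrientableClosed {n : ℕ} {R : Type} [CommRing R] (T : CechTheory n R R) (d : ℕ)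
    (A : Set (Euc n)) : Prop :=
  ∀ p ∈ A, Nonempty (T.H d (connectedComponentIn A p) ≃ₗ[R] R)

/-- A compact `d`-dimensional manifold `X` with boundary `B` is `R`-orientable if and only if
the relative group `H^d(C, B ∩ C; R)` is `≅ R` for every connected component `C` of `X`; this
cohomological characterization of `R`-orientability is valid for every commutative ring `R`
and we take it as the definition here. -/
def ROrientableWithBoundary {n : ℕ} {R : Type} [CommRing R] (T : CechTheory n R R) (d : ℕ)
    (X B : Set (Euc n)) : Prop :=
  ∀ p ∈ X,
    Nonempty (T.Hpair d (connectedComponentIn X p) (B ∩ connectedComponentIn X p) ≃ₗ[R] R)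

end CechTheory

namespace InvDom

open scoped Topology NNReal

/-- Radial projection onto the closed unit ball. -/
def rp {d : ℕ} (x : EuclideanSpace ℝ (Fin d)) : EuclideanSpace ℝ (Fin d) :=
  (max 1 ‖x‖)⁻¹ • x

lemma rp_of_le {d : ℕ} {x : EuclideanSpace ℝ (Fin d)} (h : ‖x‖ ≤ 1) : rp x = x := by
  simp [rp, max_eq_left h]

lemma norm_rp_le {d : ℕ} (x : EuclideanSpace ℝ (Fin d)) : ‖rp x‖ ≤ 1 := by
  have h0 : 0 < max 1 ‖x‖ := lt_of_lt_of_le one_pos (le_max_left _ _)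
  rw [rp, norm_smul, norm_inv, Real.norm_of_nonneg h0.le, inv_mul_le_iff₀ h0]
  simp

lemma norm_rp_of_ge {d : ℕ} {x : EuclideanSpace ℝ (Fin d)} (h : 1 ≤ ‖x‖) : ‖rp x‖ = 1 := by
  rw [rp, norm_smul, norm_inv, max_eq_right h, norm_norm, inv_mul_cancel₀]
  positivity

lemma rp_lipschitz {d : ℕ} :
    LipschitzWith 2 (rp : EuclideanSpace ℝ (Fin d) → EuclideanSpace ℝ (Fin d)) := by
  apply LipschitzWith.of_dist_le_mul
  intro x y
  rw [dist_eq_norm, dist_eq_norm]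
  have ha : 1 ≤ max 1 ‖x‖ := le_max_left _ _
  have hb : 1 ≤ max 1 ‖y‖ := le_max_left _ _
  have hab : |max 1 ‖y‖ - max 1 ‖x‖| ≤ ‖x - y‖ := by
    rw [abs_sub_comm]
    refine (abs_max_sub_max_le_max 1 ‖x‖ 1 ‖y‖).trans ?_
    simp [abs_norm_sub_norm_le]
  have hy := norm_rp_le y
  have hE : rp x - rp y = (max 1 ‖x‖)⁻¹ • (x - y)
      + ((max 1 ‖x‖)⁻¹ * (max 1 ‖y‖ - max 1 ‖x‖)) • rp y := by
    have ha0 : max 1 ‖x‖ ≠ 0 := by positivity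
    have hb0 : max 1 ‖y‖ ≠ 0 := by positivity
    simp only [rp]
    generalize max 1 ‖x‖ = a at *
    generalize max 1 ‖y‖ = b at *
    have hh : b⁻¹ = a⁻¹ - (a⁻¹ * (b - a)) * b⁻¹ := by field_simp; ring
    rw [smul_smul, smul_sub]
    conv_lhs => rw [hh]
    rw [sub_smul]
    abel
  have hi : (max 1 ‖x‖)⁻¹ ≤ 1 := inv_le_one_of_one_le₀ ha
  have hi0 : 0 ≤ (max 1 ‖x‖)⁻¹ := by positivity
  rw [hE]
  refine (norm_add_le _ _).trans ?_
  rw [norm_smul, norm_smul, norm_mul, Real.norm_of_nonneg hi0, Real.norm_eq_abs]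
  have h1 : (max 1 ‖x‖)⁻¹ * ‖x - y‖ ≤ 1 * ‖x - y‖ := by gcongr
  have h2 : (max 1 ‖x‖)⁻¹ * |max 1 ‖y‖ - max 1 ‖x‖| * ‖rp y‖ ≤ 1 * ‖x - y‖ * 1 := by gcongr
  have : ((2 : ℝ≥0) : ℝ) = 2 := rfl
  rw [this]; linarith

/-- The determinant `det (1 + t A)` is polynomial of degree `≤ d` in `t`. -/
lemma det_poly {d : ℕ} (A : EuclideanSpace ℝ (Fin d) →L[ℝ] EuclideanSpace ℝ (Fin d)) :
    ∃ p : Polynomial ℝ, p.natDegree ≤ d ∧ ∀ t : ℝ,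
      p.eval t = (ContinuousLinearMap.id ℝ (EuclideanSpace ℝ (Fin d)) + t • A).det := by
  classical
  let b := (EuclideanSpace.basisFun (Fin d) ℝ).toBasis
  let M := LinearMap.toMatrix b b (A : EuclideanSpace ℝ (Fin d) →ₗ[ℝ] EuclideanSpace ℝ (Fin d))
  refine ⟨_, (Polynomial.natDegree_det_X_add_C_le M 1).trans (by simp), ?_⟩
  intro t
  rw [← Polynomial.coe_evalRingHom, RingHom.map_det, ContinuousLinearMap.det,
    ← LinearMap.det_toMatrix b]
  congr 1
  have : LinearMap.toMatrix b b ((ContinuousLinearMap.id ℝ (EuclideanSpace ℝ (Fin d)) + t • A :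
      EuclideanSpace ℝ (Fin d) →L[ℝ] EuclideanSpace ℝ (Fin d)) :
      EuclideanSpace ℝ (Fin d) →ₗ[ℝ] EuclideanSpace ℝ (Fin d)) = 1 + t • M := by
    rw [ContinuousLinearMap.toLinearMap_add, ContinuousLinearMap.toLinearMap_smul, map_add,
      map_smul, ContinuousLinearMap.coe_id, LinearMap.toMatrix_id]
  rw [this]
  ext i j
  by_cases hij : i = j
  · subst hij
    simp
    ring
  · simp [hij]
    ring

/-- Lagrange weights. -/
lemma lagrange_weights (d : ℕ) (v : Fin (d + 1) → ℝ) (hv : Function.Injective v) :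
    ∃ w : Fin (d + 1) → ℝ, ∀ p : Polynomial ℝ, p.natDegree ≤ d →
      p.eval 1 = ∑ i, w i * p.eval (v i) := by
  refine ⟨fun i => (Lagrange.basis Finset.univ v i).eval 1, ?_⟩
  intro p hp
  have h := Lagrange.eq_interpolate (s := Finset.univ) (v := v) (f := p) hv.injOn (by
    refine lt_of_le_of_lt Polynomial.degree_le_natDegree ?_
    rw [Finset.card_univ, Fintype.card_fin]; exact_mod_cast Nat.lt_succ_of_le hp)
  conv_lhs => rw [h]
  rw [Lagrange.interpolate_apply, Polynomial.eval_finsetSum]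
  simp [mul_comm]

lemma det_pos_of_small {d : ℕ} (A : EuclideanSpace ℝ (Fin d) →L[ℝ] EuclideanSpace ℝ (Fin d))
    (L : ℝ) (hA : ‖A‖ ≤ L) (t : ℝ) (ht : 0 ≤ t) (htL : t * L < 1) :
    0 < (ContinuousLinearMap.id ℝ (EuclideanSpace ℝ (Fin d)) + t • A).det := by
  obtain ⟨p, -, hp⟩ := det_poly A
  have hL : 0 ≤ L := (norm_nonneg _).trans hA
  have hne : ∀ s ∈ Icc 0 t, p.eval s ≠ 0 := by
    intro s hs h0
    rw [hp] at h0
    have hu : IsUnit ((1 : EuclideanSpace ℝ (Fin d) →L[ℝ] EuclideanSpace ℝ (Fin d)) - (-(s • A))) := by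
      apply isUnit_one_sub_of_norm_lt_one
      rw [norm_neg, norm_smul, Real.norm_of_nonneg hs.1]
      calc s * ‖A‖ ≤ t * L := mul_le_mul hs.2 hA (norm_nonneg _) ht
        _ < 1 := htL
    rw [sub_neg_eq_add] at hu
    have hu2 := hu.map (ContinuousLinearMap.toLinearMapRingHom)
    have := hu2.map LinearMap.det
    exact this.ne_zero h0
  by_contra hcon
  rw [← hp] at hcon
  have h1 : p.eval 0 = 1 := by rw [hp]; simp [ContinuousLinearMap.det]
  have := intermediate_value_Icc' ht (p.continuous.continuousOn (s := Icc 0 t))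
  obtain ⟨s, hs, hs0⟩ := this (show (0 : ℝ) ∈ _ from ⟨not_lt.mp hcon, by simp [h1]⟩)
  exact hne s hs hs0

lemma det_zero_of_sphere {d : ℕ} {ρ : EuclideanSpace ℝ (Fin d) → EuclideanSpace ℝ (Fin d)}
    {x : EuclideanSpace ℝ (Fin d)}
    {ρ' : EuclideanSpace ℝ (Fin d) →L[ℝ] EuclideanSpace ℝ (Fin d)}
    (hρ : HasFDerivAt ρ ρ' x) (h1 : ∀ᶠ y in 𝓝 x, ‖ρ y‖ = 1) : ρ'.det = 0 := by
  by_contra hdet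
  have hu : IsUnit (ρ' : EuclideanSpace ℝ (Fin d) →ₗ[ℝ] EuclideanSpace ℝ (Fin d)) := by
    rw [LinearMap.isUnit_iff_isUnit_det]
    exact isUnit_iff_ne_zero.mpr hdet
  obtain ⟨h, hh⟩ := ((Module.End.isUnit_iff _).mp hu).2 (ρ x)
  have hh : ρ' h = ρ x := hh
  have hD := hρ.inner ℝ hρ
  have hc : HasFDerivAt (fun y => inner ℝ (ρ y) (ρ y))
      (0 : EuclideanSpace ℝ (Fin d) →L[ℝ] ℝ) x := by
    refine (hasFDerivAt_const (1 : ℝ) x).congr_of_eventuallyEq ?_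
    filter_upwards [h1] with y hy
    rw [real_inner_self_eq_norm_sq, hy]; norm_num
  have he := congrArg (fun l => l h) (hD.unique hc)
  have hx : ‖ρ x‖ = 1 := h1.self_of_nhds
  simp [fderivInnerCLM_apply, hh, hx] at he

lemma no_retraction {d : ℕ} (ρ : EuclideanSpace ℝ (Fin d) → EuclideanSpace ℝ (Fin d)) (K : ℝ≥0)
    (hρ : LipschitzOnWith K ρ (Metric.closedBall 0 1))
    (hd : ∀ x ∈ Metric.ball (0 : EuclideanSpace ℝ (Fin d)) 1, DifferentiableAt ℝ ρ x)
    (hn : ∀ x ∈ Metric.closedBall (0 : EuclideanSpace ℝ (Fin d)) 1, ‖ρ x‖ = 1)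
    (hs : ∀ x : EuclideanSpace ℝ (Fin d), ‖x‖ = 1 → ρ x = x) : False := by
  set B := Metric.ball (0 : EuclideanSpace ℝ (Fin d)) 1 with hB
  let v : EuclideanSpace ℝ (Fin d) → EuclideanSpace ℝ (Fin d) := fun x => ρ (rp x) - rp x
  set L : ℝ≥0 := K * 2 + 2 with hL
  have hv : LipschitzWith L v := by
    apply LipschitzWith.sub _ rp_lipschitz
    rw [← lipschitzOnWith_univ]
    exact hρ.comp rp_lipschitz.lipschitzOnWith (fun x _ => by simpa using norm_rp_le x)
  have hv0 : ∀ x, x ∉ B → v x = 0 := by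
    intro x hx
    have : 1 ≤ ‖x‖ := by simpa [hB] using hx
    simp [v, hs _ (norm_rp_of_ge this)]
  let A : EuclideanSpace ℝ (Fin d) → (EuclideanSpace ℝ (Fin d) →L[ℝ] EuclideanSpace ℝ (Fin d)) :=
    fun x => fderiv ℝ ρ x - ContinuousLinearMap.id ℝ _
  have hA : ∀ x ∈ B, HasFDerivAt v (A x) x := by
    intro x hx
    refine ((hd x hx).hasFDerivAt.sub (hasFDerivAt_id x)).congr_of_eventuallyEq ?_
    filter_upwards [Metric.isOpen_ball.mem_nhds hx] with y hy
    have : ‖y‖ ≤ 1 := by simpa using (Metric.ball_subset_closedBall hy)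
    simp [v, rp_of_le this]
  have hAn : ∀ x ∈ B, ‖A x‖ ≤ L := fun x hx => (hA x hx).le_of_lipschitz hv
  let f : ℝ → EuclideanSpace ℝ (Fin d) → EuclideanSpace ℝ (Fin d) := fun t x => x + t • v x
  have hfA : ∀ t, ∀ x ∈ B, HasFDerivAt (f t) (ContinuousLinearMap.id ℝ _ + t • A x) x :=
    fun t x hx => (hasFDerivAt_id x).add ((hA x hx).const_smul t)
  have hbij : ∀ t : ℝ, 0 ≤ t → t * L < 1 → Function.Bijective (f t) := by
    intro t ht htL
    rcases subsingleton_or_nontrivial (EuclideanSpace ℝ (Fin d)) with hS | hS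
    · exact ⟨fun _ _ _ => Subsingleton.elim _ _, fun y => ⟨y, Subsingleton.elim _ _⟩⟩
    have happ : ApproximatesLinearOn (f t)
        ((ContinuousLinearEquiv.refl ℝ (EuclideanSpace ℝ (Fin d)) :
          EuclideanSpace ℝ (Fin d) ≃L[ℝ] EuclideanSpace ℝ (Fin d)) :
          EuclideanSpace ℝ (Fin d) →L[ℝ] EuclideanSpace ℝ (Fin d)) univ (Real.toNNReal t * L) := by
      intro x _ y _
      have := hv.dist_le_mul x y
      rw [dist_eq_norm, dist_eq_norm] at this
      have e : f t x - f t y - (x - y) = t • (v x - v y) := by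
        simp only [f, smul_sub]; abel
      simp only [ContinuousLinearEquiv.coe_refl, ContinuousLinearMap.coe_id', id]
      rw [e, norm_smul, Real.norm_of_nonneg ht, NNReal.coe_mul,
        Real.coe_toNNReal t ht, mul_assoc]
      exact mul_le_mul_of_nonneg_left this ht
    have hN : (Real.toNNReal t * L : ℝ≥0) < ‖((ContinuousLinearEquiv.refl ℝ
        (EuclideanSpace ℝ (Fin d))).symm : EuclideanSpace ℝ (Fin d) →L[ℝ]
          EuclideanSpace ℝ (Fin d))‖₊⁻¹ := by
      have : ‖((ContinuousLinearEquiv.refl ℝ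
        (EuclideanSpace ℝ (Fin d))).symm : EuclideanSpace ℝ (Fin d) →L[ℝ]
          EuclideanSpace ℝ (Fin d))‖₊ = 1 := by
        ext
        exact ContinuousLinearMap.norm_id
      rw [this, inv_one, ← NNReal.coe_lt_coe, NNReal.coe_mul, Real.coe_toNNReal t ht]
      exact htL
    exact ⟨injOn_univ.mp (happ.injOn (Or.inr hN)), happ.surjective (Or.inr hN)⟩
  have himg : ∀ t : ℝ, 0 ≤ t → t * L < 1 → f t '' B = B := by
    intro t ht htL
    obtain ⟨hi, hsu⟩ := hbij t ht htL
    have hout : ∀ x, x ∉ B → f t x = x := fun x hx => by simp [f, hv0 x hx]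
    apply Subset.antisymm
    · rintro _ ⟨x, hx, rfl⟩
      by_contra hc
      have e : f t x = x := hi (hout _ hc)
      rw [e] at hc
      exact hc hx
    · intro y hy
      obtain ⟨x, rfl⟩ := hsu y
      refine ⟨x, ?_, rfl⟩
      by_contra hc
      rw [hout x hc] at hy
      exact hc hy
  have hint : ∀ t : ℝ, 0 ≤ t → t * L < 1 →
      IntegrableOn (fun x => (ContinuousLinearMap.id ℝ _ + t • A x).det) B volume ∧
      ∫ x in B, (ContinuousLinearMap.id ℝ _ + t • A x).det = volume.real B := by
    intro t ht htL
    have hBm : MeasurableSet B := Metric.isOpen_ball.measurableSet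
    have hder : ∀ x ∈ B, HasFDerivWithinAt (f t) (ContinuousLinearMap.id ℝ _ + t • A x) B x :=
      fun x hx => (hfA t x hx).hasFDerivWithinAt
    have hinj : InjOn (f t) B := (hbij t ht htL).1.injOn
    have hcongr : EqOn (fun x => |(ContinuousLinearMap.id ℝ _ + t • A x).det| • (1 : ℝ))
        (fun x => (ContinuousLinearMap.id ℝ _ + t • A x).det) B := by
      intro x hx
      have := det_pos_of_small (A x) L (hAn x hx) t ht htL
      simp only [smul_eq_mul, mul_one]
      exact abs_of_pos this
    have h1 := integrableOn_image_iff_integrableOn_abs_det_fderiv_smul volume hBm hder hinj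
      (fun _ => (1 : ℝ))
    have h2 := integral_image_eq_integral_abs_det_fderiv_smul volume hBm hder hinj
      (fun _ => (1 : ℝ))
    rw [himg t ht htL] at h1 h2
    constructor
    · refine (h1.mp ?_).congr_fun hcongr hBm
      exact integrableOn_const (by rw [hB]; exact measure_ball_lt_top.ne)
    · rw [← setIntegral_congr_fun hBm hcongr, ← h2]
      simp
  let τ : Fin (d + 1) → ℝ := fun i => (((L : ℝ) + 1) * ((i : ℕ) + 1))⁻¹
  have hL0 : 0 ≤ (L : ℝ) := L.2
  have hτ : Function.Injective τ := by
    intro i j hij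
    have hij := inv_injective hij
    have : ((L : ℝ) + 1) ≠ 0 := by positivity
    have := mul_left_cancel₀ this hij
    ext
    exact_mod_cast add_right_cancel this
  have hτ0 : ∀ i, 0 ≤ τ i := fun i => by positivity
  have hτL : ∀ i, τ i * L < 1 := by
    intro i
    simp only [τ]
    rw [inv_mul_lt_iff₀ (by positivity)]
    have : (0 : ℝ) ≤ (i : ℕ) := by positivity
    nlinarith
  obtain ⟨w, hw⟩ := lagrange_weights d τ hτ
  have hw1 : 1 = ∑ i, w i := by
    simpa using hw 1 (by simp)
  have hzero : ∀ x ∈ B, (0 : ℝ) = ∑ i, w i * (ContinuousLinearMap.id ℝ _ + τ i • A x).det := by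
    intro x hx
    obtain ⟨p, hp, hpe⟩ := det_poly (A x)
    have h := hw p hp
    simp only [hpe] at h
    rw [← h]
    have e : ContinuousLinearMap.id ℝ _ + (1 : ℝ) • A x = fderiv ℝ ρ x := by
      simp [A]
    rw [e]
    symm
    apply det_zero_of_sphere (hd x hx).hasFDerivAt
    filter_upwards [Metric.isOpen_ball.mem_nhds hx] with y hy
    exact hn y (Metric.ball_subset_closedBall hy)
  have hfin : ∫ x in B, (0 : ℝ) = ∑ i, w i * volume.real B := by
    rw [setIntegral_congr_fun Metric.isOpen_ball.measurableSet hzero, integral_finsetSum]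
    · refine Finset.sum_congr rfl fun i _ => ?_
      rw [integral_const_mul, (hint _ (hτ0 i) (hτL i)).2]
    · intro i _
      exact (hint _ (hτ0 i) (hτL i)).1.const_mul _
  rw [← Finset.sum_mul, ← hw1, one_mul, integral_zero] at hfin
  have hpos : 0 < volume.real B := by
    rw [hB]
    exact ENNReal.toReal_pos (Metric.measure_ball_pos _ _ one_pos).ne' measure_ball_lt_top.ne
  exact hpos.ne hfin

/-- Stability of zeros: a continuous map close to the identity on the unit ball has a zero. -/
lemma exists_zero {d : ℕ} (h : EuclideanSpace ℝ (Fin d) → EuclideanSpace ℝ (Fin d))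
    (hc : Continuous h)
    (hh : ∀ x ∈ Metric.closedBall (0 : EuclideanSpace ℝ (Fin d)) 1, ‖h x - x‖ ≤ 1 / 2) :
    ∃ x ∈ Metric.closedBall (0 : EuclideanSpace ℝ (Fin d)) 1, h x = 0 := by
  by_contra! hne
  have hcomp : IsCompact (Metric.closedBall (0 : EuclideanSpace ℝ (Fin d)) 1) :=
    isCompact_closedBall _ _
  obtain ⟨x₀, hx₀, hmin⟩ := hcomp.exists_isMinOn ⟨0, by simp⟩ hc.norm.continuousOn
  set δ := ‖h x₀‖ with hδ
  have hδ0 : 0 < δ := norm_pos_iff.mpr (hne x₀ hx₀)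
  have hδh : ∀ x ∈ Metric.closedBall (0 : EuclideanSpace ℝ (Fin d)) 1, δ ≤ ‖h x‖ :=
    fun x hx => hmin hx
  set ε := min (δ / 2) (1 / 4) with hε
  have hε0 : 0 < ε := by positivity
  obtain ⟨P, hP, hPh, -⟩ := hc.exists_contDiff_approx 1 (ε := fun _ => ε) continuous_const
    (fun _ => hε0)
  obtain ⟨N, hN⟩ := exists_pow_lt_of_lt_one (half_pos hδ0) (show (9 / 16 : ℝ) < 1 by norm_num)
  let g : EuclideanSpace ℝ (Fin d) → EuclideanSpace ℝ (Fin d) :=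
    fun x => P x + ((‖x‖ ^ 2) ^ N) • (x - P x)
  have hgC : ContDiff ℝ 1 g := by
    have hpow : ContDiff ℝ 1 (fun x : EuclideanSpace ℝ (Fin d) => (‖x‖ ^ 2) ^ N) :=
      (contDiff_norm_sq ℝ).pow N
    have hsub : ContDiff ℝ 1 (fun x : EuclideanSpace ℝ (Fin d) => x - P x) :=
      contDiff_id.sub hP
    exact ContDiff.add hP (hpow.smul hsub)
  have hg0 : ∀ x ∈ Metric.closedBall (0 : EuclideanSpace ℝ (Fin d)) 1, g x ≠ 0 := by
    intro x hx h0
    have hx1 : ‖x‖ ≤ 1 := by simpa using hx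
    have hPx : ‖P x - h x‖ < ε := by rw [← dist_eq_norm]; exact hPh x
    have hxP : ‖x - P x‖ ≤ 3 / 4 := by
      have : x - P x = -(h x - x) - (P x - h x) := by abel
      rw [this]
      refine (norm_sub_le _ _).trans ?_
      rw [norm_neg]
      have := hh x hx
      have := min_le_right (δ / 2) (1 / 4)
      linarith
    set s := (‖x‖ ^ 2) ^ N with hs
    have hs0 : 0 ≤ s := by positivity
    have hs1 : s ≤ 1 := pow_le_one₀ (by positivity) (pow_le_one₀ (norm_nonneg _) hx1)
    have e1 : x = (1 - s) • (x - P x) := by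
      have : x - g x = (1 - s) • (x - P x) := by
        simp only [g, ← hs, sub_smul, one_smul]; abel
      rwa [h0, sub_zero] at this
    have hx34 : ‖x‖ ≤ 3 / 4 := by
      rw [e1, norm_smul, Real.norm_of_nonneg (by linarith)]
      nlinarith [norm_nonneg (x - P x)]
    have hs2 : s < δ / 2 := by
      refine lt_of_le_of_lt ?_ hN
      rw [hs]
      gcongr
      nlinarith [norm_nonneg x]
    have e2 : P x = -(s • (x - P x)) := eq_neg_of_add_eq_zero_left h0
    have hPn : ‖P x‖ < δ / 2 := by
      rw [e2, norm_neg, norm_smul, Real.norm_of_nonneg hs0]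
      nlinarith [norm_nonneg (x - P x)]
    have h3 : ‖h x‖ ≤ ‖P x‖ + ‖P x - h x‖ := by
      have : h x = P x - (P x - h x) := by abel
      conv_lhs => rw [this]
      exact norm_sub_le _ _
    have := hδh x hx
    have := min_le_left (δ / 2) (1 / 4)
    linarith
  let ρ : EuclideanSpace ℝ (Fin d) → EuclideanSpace ℝ (Fin d) := fun x => ‖g x‖⁻¹ • g x
  have hρC : ∀ x ∈ Metric.closedBall (0 : EuclideanSpace ℝ (Fin d)) 1, ContDiffAt ℝ 1 ρ x := by
    intro x hx
    exact ((hgC.contDiffAt.norm ℝ (hg0 x hx)).inv (norm_ne_zero_iff.mpr (hg0 x hx))).smul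
      hgC.contDiffAt
  have hρOn : ContDiffOn ℝ 1 ρ (Metric.closedBall 0 1) :=
    fun x hx => (hρC x hx).contDiffWithinAt
  obtain ⟨K, hK⟩ := hρOn.exists_lipschitzOnWith one_ne_zero (convex_closedBall _ _) hcomp
  refine no_retraction ρ K hK ?_ ?_ ?_
  · intro x hx
    exact (hρC x (Metric.ball_subset_closedBall hx)).differentiableAt one_ne_zero
  · intro x hx
    simp only [ρ]
    rw [norm_smul, norm_inv, norm_norm, inv_mul_cancel₀ (norm_ne_zero_iff.mpr (hg0 x hx))]
  · intro x hx
    have : g x = x := by simp [g, hx]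
    simp [ρ, this, hx]

/-- Local invariance of domain. -/
lemma invariance {d : ℕ} (f : EuclideanSpace ℝ (Fin d) → EuclideanSpace ℝ (Fin d))
    (hf : ContinuousOn f (Metric.closedBall 0 1)) (hi : InjOn f (Metric.closedBall 0 1)) :
    f '' Metric.closedBall 0 1 ∈ 𝓝 (f 0) := by
  by_contra hnot
  have hcomp : IsCompact (Metric.closedBall (0 : EuclideanSpace ℝ (Fin d)) 1) :=
    isCompact_closedBall _ _
  have h0mem : (0 : EuclideanSpace ℝ (Fin d)) ∈ Metric.closedBall 0 1 := by simp
  have hT : TietzeExtension.{0} (EuclideanSpace ℝ (Fin d)) := TietzeExtension.of_tvs ℝ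
  obtain ⟨G, hG⟩ : ∃ G : EuclideanSpace ℝ (Fin d) → EuclideanSpace ℝ (Fin d),
      Continuous G ∧ ∀ x ∈ Metric.closedBall 0 1, G (f x) = x := by
    have : CompactSpace (Metric.closedBall (0 : EuclideanSpace ℝ (Fin d)) 1) :=
      isCompact_iff_compactSpace.mp hcomp
    have he : Topology.IsClosedEmbedding
        (fun x : Metric.closedBall (0 : EuclideanSpace ℝ (Fin d)) 1 => f x) := by
      apply Continuous.isClosedEmbedding
      · exact continuousOn_iff_continuous_domRestrict.mp hf
      · intro x y hxy
        exact Subtype.ext (hi x.2 y.2 hxy)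
    obtain ⟨g, hg⟩ := ContinuousMap.exists_extension he ⟨Subtype.val, continuous_subtype_val⟩
    exact ⟨g, g.continuous, fun x hx => congrArg (fun l => l ⟨x, hx⟩) hg⟩
  obtain ⟨hGc, hGf⟩ := hG
  have hG0 : G (f 0) = 0 := hGf 0 h0mem
  obtain ⟨ε', hε', hGε⟩ := Metric.continuousAt_iff.mp (hGc.continuousAt (x := f 0)) (1 / 10)
    (by norm_num)
  simp only [hG0, dist_zero_right] at hGε
  set ε := ε' / 3 with hε
  have hε0 : 0 < ε := by positivity
  obtain ⟨c, hcε, hcn⟩ : ∃ c, dist c (f 0) < ε ∧ c ∉ f '' Metric.closedBall 0 1 := by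
    by_contra! hcon
    exact hnot (mem_of_superset (Metric.ball_mem_nhds _ hε0) fun c hc => hcon c hc)
  set Im₀ := f '' Metric.closedBall 0 1 with hIm₀
  have hImc : IsCompact Im₀ := hcomp.image_of_continuousOn hf
  obtain ⟨δ, hδ0, hδ⟩ : ∃ δ : ℝ, 0 < δ ∧ ∀ y ∈ Im₀, ε ≤ ‖y - c‖ → δ ≤ ‖G y‖ := by
    have hc1 : IsCompact (Im₀ ∩ {y | ε ≤ ‖y - c‖}) :=
      hImc.inter_right (isClosed_le continuous_const (by fun_prop))
    obtain ⟨δ, hδ0, hδ⟩ := hc1.exists_forall_le' (f := fun y => ‖G y‖) hGc.norm.continuousOn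
      (a := 0) (by
        rintro y ⟨⟨x, hx, rfl⟩, hy⟩
        apply norm_pos_iff.mpr
        rw [hGf x hx]
        rintro rfl
        rw [dist_comm, dist_eq_norm] at hcε
        exact absurd hy (not_le.mpr hcε))
    exact ⟨δ, hδ0, fun y hy hy' => hδ y ⟨hy, hy'⟩⟩
  set η := min δ (1 / 10) with hη
  have hη0 : 0 < η := by positivity
  obtain ⟨P, hP, hPG, -⟩ := hGc.exists_contDiff_approx 1 (ε := fun _ => η / 2) continuous_const
    (fun _ => by positivity)
  obtain ⟨a, ha, haS⟩ : ∃ a : EuclideanSpace ℝ (Fin d), ‖a‖ < η / 2 ∧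
      a ∉ P '' Metric.sphere c ε := by
    have hz : volume (P '' Metric.sphere c ε) = 0 :=
      addHaar_image_eq_zero_of_differentiableOn_of_addHaar_eq_zero volume
        (hP.differentiable one_ne_zero).differentiableOn
        (Measure.addHaar_sphere_of_ne_zero volume c hε0.ne')
    by_contra! hcon
    have hsub : Metric.ball (0 : EuclideanSpace ℝ (Fin d)) (η / 2) ⊆ P '' Metric.sphere c ε :=
      fun a ha => hcon a (by simpa using ha)
    exact (Metric.measure_ball_pos volume (0 : EuclideanSpace ℝ (Fin d)) (half_pos hη0)).ne'
      (measure_mono_null hsub hz)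
  let Q : EuclideanSpace ℝ (Fin d) → EuclideanSpace ℝ (Fin d) := fun y => P y - a
  have hQc : Continuous Q := hP.continuous.sub continuous_const
  have hQG : ∀ y, ‖Q y - G y‖ < η := by
    intro y
    have h1 := hPG y
    rw [dist_eq_norm] at h1
    have : Q y - G y = (P y - G y) - a := by simp only [Q]; abel
    rw [this]
    exact (norm_sub_le _ _).trans_lt (by linarith)
  let Φ : EuclideanSpace ℝ (Fin d) → EuclideanSpace ℝ (Fin d) :=
    fun y => c + (max (ε / ‖y - c‖) 1) • (y - c)
  have hΦ1 : ∀ y, y ≠ c → ε ≤ ‖y - c‖ → Φ y = y := by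
    intro y hy h
    have h0 : 0 < ‖y - c‖ := norm_pos_iff.mpr (sub_ne_zero.mpr hy)
    have : ε / ‖y - c‖ ≤ 1 := (div_le_one h0).mpr h
    simp [Φ, max_eq_right this]
  have hΦ2 : ∀ y, y ≠ c → ‖y - c‖ < ε → ‖Φ y - c‖ = ε := by
    intro y hy h
    have h0 : 0 < ‖y - c‖ := norm_pos_iff.mpr (sub_ne_zero.mpr hy)
    have h1 : 1 ≤ ε / ‖y - c‖ := (one_le_div h0).mpr h.le
    have h2 : 0 ≤ ε / ‖y - c‖ := by positivity
    simp only [Φ, max_eq_left h1, add_sub_cancel_left]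
    rw [norm_smul, Real.norm_of_nonneg h2, div_mul_cancel₀ _ h0.ne']
  have hfne : ∀ x ∈ Metric.closedBall 0 1, f x ≠ c := by
    intro x hx h
    exact hcn ⟨x, hx, h⟩
  have hΦf : ContinuousOn (fun x => Φ (f x)) (Metric.closedBall 0 1) := by
    have hsub : ContinuousOn (fun x => f x - c) (Metric.closedBall 0 1) :=
      hf.sub continuousOn_const
    have hdiv : ContinuousOn (fun x => ε / ‖f x - c‖) (Metric.closedBall 0 1) :=
      ContinuousOn.div continuousOn_const hsub.norm
        (fun x hx => norm_ne_zero_iff.mpr (sub_ne_zero.mpr (hfne x hx)))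
    have hmax : ContinuousOn (fun x => max (ε / ‖f x - c‖) 1) (Metric.closedBall 0 1) :=
      hdiv.sup continuousOn_const
    have hsm : ContinuousOn (fun x => max (ε / ‖f x - c‖) 1 • (f x - c))
      (Metric.closedBall 0 1) := hmax.smul hsub
    exact continuousOn_const.add hsm
  have hrpm : ∀ x : EuclideanSpace ℝ (Fin d), rp x ∈ Metric.closedBall 0 1 :=
    fun x => by simpa using norm_rp_le x
  have hcont : Continuous (fun x => Q (Φ (f (rp x)))) :=
    hQc.comp (hΦf.comp_continuous rp_lipschitz.continuous hrpm)
  have hη1 : η ≤ 1 / 10 := min_le_right _ _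
  have hη2 : η ≤ δ := min_le_left _ _
  obtain ⟨x, hx, hx0⟩ := exists_zero _ hcont (by
    intro x hx
    have hx1 : ‖x‖ ≤ 1 := by simpa using hx
    rw [rp_of_le hx1]
    rcases le_or_gt ε ‖f x - c‖ with h | h
    · rw [hΦ1 _ (hfne x hx) h]
      have := hQG (f x)
      rw [hGf x hx] at this
      linarith
    · have h1 := hΦ2 _ (hfne x hx) h
      have h2 : ‖G (Φ (f x))‖ < 1 / 10 := by
        apply hGε
        refine (dist_triangle _ c _).trans_lt ?_
        rw [dist_eq_norm, h1]
        linarith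
      have h3 : ‖G (f x)‖ < 1 / 10 := by
        apply hGε
        refine (dist_triangle _ c _).trans_lt ?_
        rw [dist_eq_norm]
        linarith
      rw [hGf x hx] at h3
      have h4 := hQG (Φ (f x))
      have : Q (Φ (f x)) - x = (Q (Φ (f x)) - G (Φ (f x))) + G (Φ (f x)) - x := by abel
      rw [this]
      refine (norm_sub_le _ _).trans ?_
      have := norm_add_le (Q (Φ (f x)) - G (Φ (f x))) (G (Φ (f x)))
      linarith)
  have hx1 : ‖x‖ ≤ 1 := by simpa using hx
  rw [rp_of_le hx1] at hx0
  rcases le_or_gt ε ‖f x - c‖ with h | h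
  · rw [hΦ1 _ (hfne x hx) h] at hx0
    have h1 := hQG (f x)
    rw [hx0, zero_sub, norm_neg] at h1
    have := hδ (f x) ⟨x, hx, rfl⟩ h
    linarith
  · apply haS
    refine ⟨Φ (f x), ?_, sub_eq_zero.mp hx0⟩
    rw [mem_sphere_iff_norm]
    exact hΦ2 _ (hfne x hx) h

/-- A `d`-manifold contained in a `d`-manifold is relatively open. -/
lemma mfd_mem_nhdsWithin {n d : ℕ} {M N : Set (Euc n)} (hMN : M ⊆ N) {p : Euc n} (hp : p ∈ M)
    (hM : LocEuclAt d M ⟨p, hp⟩) (hN : LocEuclAt d N ⟨p, hMN hp⟩) : M ∈ 𝓝[N] p := by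
  obtain ⟨U, -, hpU, ⟨φ⟩⟩ := hM
  obtain ⟨V, hV, hpV, ⟨ψ⟩⟩ := hN
  let pU : U := ⟨⟨p, hp⟩, hpU⟩
  let pV : V := ⟨⟨p, hMN hp⟩, hpV⟩
  let g : EuclideanSpace ℝ (Fin d) → N := fun x => ⟨((φ.symm x : U) : M), hMN (φ.symm x : U).1.2⟩
  have hg : Continuous g := by
    apply Continuous.subtype_mk
    exact continuous_subtype_val.comp (continuous_subtype_val.comp φ.symm.continuous)
  have hgi : Function.Injective g := by
    intro x y hxy
    have h1 : (((φ.symm x : U) : M) : Euc n) = ((φ.symm y : U) : M) :=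
      congrArg (fun z : N => (z : Euc n)) hxy
    exact φ.symm.injective (Subtype.ext (Subtype.ext h1))
  have hgp : g (φ pU) = ⟨p, hMN hp⟩ := by
    apply Subtype.ext
    simp [g, pU]
  have hgM : ∀ x, (g x : Euc n) ∈ M := fun x => (φ.symm x : U).1.2
  obtain ⟨r, hr, hrV⟩ := Metric.isOpen_iff.mp (hV.preimage hg) (φ pU) (by
    rw [mem_preimage, hgp]; exact hpV)
  let sg : EuclideanSpace ℝ (Fin d) → EuclideanSpace ℝ (Fin d) := fun x => φ pU + (r / 2) • x
  have hsg : Continuous sg := by fun_prop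
  have hsgi : Function.Injective sg := by
    intro x y hxy
    exact smul_right_injective _ (half_pos hr).ne' (add_left_cancel hxy)
  have hsgV : ∀ x ∈ Metric.closedBall (0 : EuclideanSpace ℝ (Fin d)) 1, g (sg x) ∈ V := by
    intro x hx
    apply hrV
    have hx1 : ‖x‖ ≤ 1 := by simpa using hx
    rw [mem_ball_iff_norm]
    simp only [sg, add_sub_cancel_left]
    rw [norm_smul, Real.norm_of_nonneg (half_pos hr).le]
    nlinarith
  classical
  let f : EuclideanSpace ℝ (Fin d) → EuclideanSpace ℝ (Fin d) :=
    fun x => if h : g (sg x) ∈ V then ψ ⟨g (sg x), h⟩ else 0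
  have hfe : ∀ x (hx : x ∈ Metric.closedBall (0 : EuclideanSpace ℝ (Fin d)) 1),
      f x = ψ ⟨g (sg x), hsgV x hx⟩ := fun x hx => dif_pos (hsgV x hx)
  have hfc : ContinuousOn f (Metric.closedBall 0 1) := by
    rw [continuousOn_iff_continuous_domRestrict]
    have : (Metric.closedBall 0 1).domRestrict f =
        fun x : Metric.closedBall (0 : EuclideanSpace ℝ (Fin d)) 1 =>
          ψ ⟨g (sg x), hsgV x x.2⟩ := by
      funext x
      exact hfe x x.2
    rw [this]
    apply ψ.continuous.comp
    apply Continuous.subtype_mk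
    exact hg.comp (hsg.comp continuous_subtype_val)
  have hfi : InjOn f (Metric.closedBall 0 1) := by
    intro x hx y hy hxy
    rw [hfe x hx, hfe y hy] at hxy
    have := congrArg Subtype.val (ψ.injective hxy)
    exact hsgi (hgi this)
  have hnh := invariance f hfc hfi
  have h0 : (0 : EuclideanSpace ℝ (Fin d)) ∈ Metric.closedBall 0 1 := by simp
  have hf0 : f 0 = ψ pV := by
    rw [hfe 0 h0]
    congr 1
    apply Subtype.ext
    simp only [sg, smul_zero, add_zero]
    exact hgp
  rw [hf0] at hnh
  have h1 : ψ ⁻¹' (f '' Metric.closedBall 0 1) ∈ 𝓝 pV := ψ.continuous.continuousAt hnh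
  have h2 : Subtype.val '' (ψ ⁻¹' (f '' Metric.closedBall 0 1)) ∈ 𝓝 (⟨p, hMN hp⟩ : N) :=
    hV.isOpenMap_subtype_val.image_mem_nhds h1
  rw [nhdsWithin_eq_map_subtype_coe (hMN hp), mem_map]
  refine mem_of_superset h2 ?_
  rintro _ ⟨v, ⟨x, hx, hxv⟩, rfl⟩
  rw [hfe x hx] at hxv
  have := ψ.injective hxv
  rw [← this]
  exact hgM (sg x)

/-- Transfer of local charts between sets where the smaller one is relatively open. -/
lemma locEucl_of_nhds {n d : ℕ} {M N : Set (Euc n)} (hMN : M ⊆ N)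
    (ho : ∀ q ∈ M, M ∈ 𝓝[N] q) {p : Euc n} (hp : p ∈ M) (hM : LocEuclAt d M ⟨p, hp⟩) :
    LocEuclAt d N ⟨p, hMN hp⟩ := by
  obtain ⟨U, hU, hpU, ⟨φ⟩⟩ := hM
  have hemb : Topology.IsOpenEmbedding (Set.inclusion hMN) := by
    refine ⟨Topology.IsEmbedding.inclusion hMN, ?_⟩
    rw [Set.range_inclusion, isOpen_iff_mem_nhds]
    rintro ⟨q, hq⟩ hqM
    have := ho q hqM
    rw [nhdsWithin_eq_map_subtype_coe hq, mem_map] at this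
    exact this
  refine ⟨Set.inclusion hMN '' U, hemb.isOpenMap _ hU, ⟨⟨p, hp⟩, hpU, rfl⟩, ⟨?_⟩⟩
  exact (hemb.isEmbedding.homeomorphImage U).symm.trans φ

lemma res_res {n : ℕ} {R : Type} [CommRing R] {G : Type} [AddCommGroup G] [Module R G]
    (T : CechTheory n R G) (k : ℕ) {A B C : Set (Euc n)} (h : A ⊆ B) (h' : B ⊆ C)
    (x : T.Hred k C) : T.res k h (T.res k h' x) = T.res k (h.trans h') x := by
  have := T.mapRed_comp k ⟨Set.inclusion h, continuous_inclusion h⟩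
    ⟨Set.inclusion h', continuous_inclusion h'⟩
  have h2 := congrArg (fun l => l x) (congrArg (fun l => l.hom) this)
  exact h2.symm

lemma resH_resH {n : ℕ} {R : Type} [CommRing R] {G : Type} [AddCommGroup G] [Module R G]
    (T : CechTheory n R G) (k : ℕ) {A B C : Set (Euc n)} (h : A ⊆ B) (h' : B ⊆ C)
    (x : T.H k C) : T.resH k h (T.resH k h' x) = T.resH k (h.trans h') x := by
  have := T.map_comp k ⟨Set.inclusion h, continuous_inclusion h⟩
    ⟨Set.inclusion h', continuous_inclusion h'⟩
  have h2 := congrArg (fun l => l x) (congrArg (fun l => l.hom) this)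
  exact h2.symm

lemma res_toRed {n : ℕ} {R : Type} [CommRing R] {G : Type} [AddCommGroup G] [Module R G]
    (T : CechTheory n R G) (k : ℕ) {A B : Set (Euc n)} (h : A ⊆ B)
    (x : T.H k B) : T.res k h (T.toRed k B x) = T.toRed k A (T.resH k h x) := by
  have key : T.toRed k B ≫ T.res k h = T.resH k h ≫ T.toRed k A := by
    cases k with
    | zero => exact (T.projRed_natural _).symm
    | succ k =>
      simp only [CechTheory.toRed, CechTheory.res, CechTheory.resH]
      rw [Iso.inv_comp_eq, ← Category.assoc, Iso.eq_comp_inv]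
      exact T.redIso_natural (k + 1) (Nat.succ_pos k) _
  exact congrArg (fun l => l x) (congrArg (fun l => l.hom) key)

/-- If `M ⊆ N` is relatively clopen then components of `N` at points of `M` are those of `M`. -/
lemma component_eq {n : ℕ} {M N : Set (Euc n)} (hMN : M ⊆ N) (hc : IsClosed M)
    (ho : ∀ q ∈ M, M ∈ 𝓝[N] q) {p : Euc n} (hp : p ∈ M) :
    connectedComponentIn N p = connectedComponentIn M p := by
  apply Subset.antisymm
  · have hclopen : IsClopen ((↑) ⁻¹' M : Set N) := by
      refine ⟨hc.preimage continuous_subtype_val, ?_⟩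
      rw [isOpen_iff_mem_nhds]
      rintro ⟨q, hq⟩ hqM
      have := ho q hqM
      rw [nhdsWithin_eq_map_subtype_coe hq, mem_map] at this
      exact this
    have hsub : connectedComponentIn N p ⊆ M := by
      rw [connectedComponentIn_eq_image (hMN hp)]
      rintro _ ⟨q, hq, rfl⟩
      exact hclopen.connectedComponent_subset (x := ⟨p, hMN hp⟩) hp hq
    exact isPreconnected_connectedComponentIn.subset_connectedComponentIn
      (mem_connectedComponentIn (hMN hp)) hsub
  · exact connectedComponentIn_mono p hMN
end InvDom

/-- gluing.  Let `G = R`.  Suppose `A = A₁ ∪ ⋯ ∪ A_k` where the `Aᵢ` are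
`(m-1)`-dimensional closed `R`-orientable topological manifolds, and every non-empty
intersection of the `Aᵢ`'s is again an `(m-1)`-dimensional closed manifold (equivalently,
every connected component of `A` is contained in some `Aᵢ`).  Then `A` is an
`(m-1)`-dimensional closed `R`-orientable manifold, and if each `Xᵢ` is a surface with
coboundary `⊇ L^R(Aᵢ)` then `X = X₁ ∪ ⋯ ∪ X_k` is a surface with coboundary `⊇ L^R(A)`. -/
theorem stmt19 {n : ℕ} {R : Type} [CommRing R]
    (T : CechTheory n R R) (m k : ℕ) (hm : 1 ≤ m) (hmn : m ≤ n)
    (A : Set (Euc n)) (A' : Fin k → Set (Euc n)) (hA : A = ⋃ i, A' i)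
    (hA'mfd : ∀ i, IsClosedManifold (m - 1) (A' i))
    (hA'or : ∀ i, T.ROrientableClosed (m - 1) (A' i))
    (hinter : ∀ S : Finset (Fin k), S.Nonempty → (⋂ i ∈ S, A' i).Nonempty →
      IsClosedManifold (m - 1) (⋂ i ∈ S, A' i))
    (X' : Fin k → Set (Euc n))
    (hX' : ∀ i, T.IsSurface m (A' i) (X' i) (T.LR m (A' i))) :
    IsClosedManifold (m - 1) A ∧ T.ROrientableClosed (m - 1) A ∧
      T.IsSurface m A (⋃ i, X' i) (T.LR m A) := by
  have hcl : ∀ i, IsClosed (A' i) := fun i => (hA'mfd i).1.isClosed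
  have hsub : ∀ i, A' i ⊆ A := fun i => hA ▸ subset_iUnion A' i
  have hopen : ∀ i, ∀ p ∈ A' i, A' i ∈ nhdsWithin p A := by
    intro i p hp
    have hij : ∀ j, A' i ∈ nhdsWithin p (A' j) := by
      intro j
      by_cases hpj : p ∈ A' j
      · have hI : (⋂ l ∈ ({i, j} : Finset (Fin k)), A' l) = A' i ∩ A' j := by
          simp
        have hpI : p ∈ A' i ∩ A' j := ⟨hp, hpj⟩
        have hm := hinter {i, j} ⟨i, by simp⟩ (by rw [hI]; exact ⟨p, hpI⟩)
        rw [hI] at hm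
        exact mem_of_superset (InvDom.mfd_mem_nhdsWithin inter_subset_right hpI
          (hm.2 ⟨p, hpI⟩) ((hA'mfd j).2 ⟨p, hpj⟩)) inter_subset_left
      · have : nhdsWithin p (A' j) = ⊥ := by
          rw [← notMem_closure_iff_nhdsWithin_eq_bot, (hcl j).closure_eq]
          exact hpj
        rw [this]
        exact mem_bot
    rw [hA, nhdsWithin_iUnion]
    exact mem_iSup.mpr hij
  have hcomp : ∀ i, ∀ p ∈ A' i, connectedComponentIn A p = connectedComponentIn (A' i) p :=
    fun i p hp => InvDom.component_eq (hsub i) (hcl i) (hopen i) hp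
  have hmem : ∀ p ∈ A, ∃ i, p ∈ A' i := by
    intro p hp
    rw [hA] at hp
    exact mem_iUnion.mp hp
  refine ⟨⟨?_, ?_⟩, ?_, ?_⟩
  · rw [hA]
    exact isCompact_iUnion fun i => (hA'mfd i).1
  · rintro ⟨p, hp⟩
    obtain ⟨i, hi⟩ := hmem p hp
    exact InvDom.locEucl_of_nhds (hsub i) (hopen i) hi ((hA'mfd i).2 ⟨p, hi⟩)
  · intro p hp
    obtain ⟨i, hi⟩ := hmem p hp
    rw [hcomp i p hi]
    exact hA'or i p hi
  · have hAX : A ⊆ ⋃ i, X' i := by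
      rw [hA]
      exact iUnion_mono fun i => (hX' i).1
    refine ⟨hAX, ?_⟩
    rintro _ ⟨x, ⟨p, hp, hgen, hzero⟩, rfl⟩ ⟨y, hy⟩
    obtain ⟨i, hi⟩ := hmem p hp
    obtain ⟨hAXi, hXi⟩ := hX' i
    refine hXi (T.toRed (m - 1) (A' i) (T.resH (m - 1) (hsub i) x)) ⟨_, ⟨p, hi, ?_, ?_⟩, rfl⟩
      ⟨T.res (m - 1) (subset_iUnion X' i) y, ?_⟩
    · rw [InvDom.resH_resH]
      have key : ∀ (C : Set (Euc n)) (hC : C ⊆ A), C = connectedComponentIn A p →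
          Submodule.span R {T.resH (m - 1) hC x} = ⊤ := by
        rintro C hC rfl
        exact hgen
      exact key _ _ (hcomp i p hi).symm
    · intro q hq hne
      rw [InvDom.resH_resH]
      have key : ∀ (C : Set (Euc n)) (hC : C ⊆ A), C = connectedComponentIn A q →
          T.resH (m - 1) hC x = 0 := by
        rintro C hC rfl
        refine hzero q (hsub i hq) ?_
        rw [hcomp i p hi, hcomp i q hq]
        exact hne
      exact key _ _ (hcomp i q hq).symm
    · rw [InvDom.res_res, ← InvDom.res_toRed, ← hy, InvDom.res_res]
end
end
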